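/- Computation of the topological entropy of Σ(u,v). Let k ≥ 2 and let u, v ∈ A^ℕ satisfy u₀ = 0, v₀ = k−1, and u ≼ σⁿu ≼ v and u ≼ σⁿv ≼ v for all n ≥ 0; if k = 2 assume additionally σu ≼ σv. Then: (a) if h(Σ(u,v)) > 0, there exist α ∈ [0,1] and β ∈ (1,∞) such that φ̄_∞^{α,β}(σu) = α and φ̄_∞^{α,β}(σv) = α+β−k+1; (b) for every α ∈ [0,1] and β ∈ (1,∞) satisfying φ̄_∞^{α,β}(σu) = α and φ̄_∞^{α,β}(σv) = α+β−k+1, one has h(Σ(u,v)) = log₂ β. -/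

import Mathlib

open Filter Set

/-- The shift map on one-sided sequences. -/
def shft (x : ℕ → ℕ) : ℕ → ℕ := fun n => x (n + 1)

/-- Strict lexicographic order on one-sided sequences:
`x ≺ y` iff they differ and `x m < y m` at the first index `m` where they differ. -/
def lexLt (x y : ℕ → ℕ) : Prop := ∃ m, (∀ i, i < m → x i = y i) ∧ x m < y m

/-- Lexicographic order `x ≼ y` on one-sided sequences. -/
def lexLe (x y : ℕ → ℕ) : Prop := x = y ∨ lexLt x y

/-- The map `φ̄^{α,β} : ℝ → [0,1]`:  `0` for `t ≤ α`, `(t-α)/β` for `α ≤ t ≤ α+β`,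
`1` for `t ≥ α+β`. -/
noncomputable def phiB (α β t : ℝ) : ℝ :=
  if t ≤ α then 0 else if α + β ≤ t then 1 else (t - α) / β

/-- `φ̄ₙ^{α,β}(x) = φ̄^{α,β}(x₀ + φ̄^{α,β}(x₁ + ⋯ + φ̄^{α,β}(x_{n-1})⋯))`. -/
noncomputable def phiBN (α β : ℝ) : ℕ → (ℕ → ℕ) → ℝ
  | 0, _ => 0
  | n + 1, x => phiB α β (x 0 + phiBN α β n (shft x))

/-- `φ̄_∞^{α,β}(x) = limₙ φ̄ₙ^{α,β}(x)`; the sequence `φ̄ₙ^{α,β}(x)` is nondecreasing in `n`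
and bounded, so its limit is its supremum. -/
noncomputable def phiBInf (α β : ℝ) (x : ℕ → ℕ) : ℝ := ⨆ n, phiBN α β n x

/-- `T̂_{α,β}(x) = βx + α − ⌊βx + α⌋`. -/
noncomputable def Tlow (α β x : ℝ) : ℝ := β * x + α - ⌊β * x + α⌋

/-- `Ť_{α,β}(x) = βx + α + 1 − ⌈βx + α⌉`. -/
noncomputable def Thigh (α β x : ℝ) : ℝ := β * x + α + 1 - ⌈β * x + α⌉

/-- `k = ⌈α + β⌉`, the size of the alphabet `A = {0, …, k-1}`. -/
noncomputable def kAB (α β : ℝ) : ℕ := (⌈α + β⌉).toNat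

/-- The string `u^{α,β}`, the coding of the orbit of `0`:
`u^{α,β}ₙ = ⌊β T̂ⁿ_{α,β}(0) + α⌋`. -/
noncomputable def uItin (α β : ℝ) : ℕ → ℕ := fun n => (⌊β * (Tlow α β)^[n] 0 + α⌋).toNat

/-- The string `v^{α,β}`, the coding of the orbit of `1`:
`v^{α,β}ₙ = ⌈β Ťⁿ_{α,β}(1) + α⌉ − 1`. -/
noncomputable def vItin (α β : ℝ) : ℕ → ℕ := fun n => (⌈β * (Thigh α β)^[n] 1 + α⌉ - 1).toNat

/-- The shift space `Σ(u,v) = {x ∈ A^ℕ : u ≼ σⁿx ≼ v for all n ≥ 0}`, `A = {0,…,k-1}`. -/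
def SigSet (k : ℕ) (u v : ℕ → ℕ) : Set (ℕ → ℕ) :=
  {x | (∀ i, x i < k) ∧ ∀ n, lexLe u (shft^[n] x) ∧ lexLe (shft^[n] x) v}

/-- The number of words of length `n` in the language of `Σ(u,v)` (prefixes of elements). -/
noncomputable def nWords (k : ℕ) (u v : ℕ → ℕ) (n : ℕ) : ℕ :=
  Nat.card {w : Fin n → ℕ // ∃ x ∈ SigSet k u v, ∀ i : Fin n, x i.1 = w i}

/-- The topological entropy (base 2) of `Σ(u,v)`:
`h = limₙ (1/n) log₂ card(Lₙ)` (the limit exists by subadditivity, so it equals the limsup;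
it is `0` when `Σ(u,v) = ∅`). -/
noncomputable def entS (k : ℕ) (u v : ℕ → ℕ) : ℝ :=
  Filter.limsup (fun n : ℕ => Real.logb 2 (nWords k u v n) / (n : ℝ)) Filter.atTop

/-- Concatenation of the word `w₀ ⋯ w_{p-1}` (the first `p` letters of `w`) with the
string `y`. -/
def wcat (p : ℕ) (w y : ℕ → ℕ) : ℕ → ℕ := fun n => if n < p then w n else y (n - p)

/-!
Write `N n` for the number of words of length `n` of `Σ(u,v)`, and `λ` for its exponential growth
rate. For `x ∈ Σ(u,v)`, the words of length `n` below the prefix of `x` are counted by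
`∑ xᵢ - uᵢ` weighted by `N (n - 1 - i)`, so that their generating function is `∑ (xᵢ - uᵢ) tⁱ⁺¹`
times that of `N`. Hence that series lies in `[0,1]` for `t < 1/λ`, and in the limit
`t → 1/λ`, where the generating function of `N` diverges, it becomes a map
`φ : Σ(u,v) → [0,1]` with `φ(u) = 0`, `φ(v) = 1` and `λ φ(x) + φ(σu) = x₀ + φ(σx)`. Such a
linearization of slope `β` is the same thing as a solution `(α,β)` of the two equations, the map
being `φ̄_∞^{α,β}` and `α = φ(σu)`.

It remains to see that all linearizations have the same slope. If `φ` and `ψ` have slopes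
`β < γ`, it suffices to bound `ψ` by a multiple of `φ`, and `1 - ψ` by a multiple of `1 - φ`: two
strings which first differ at `m` are spread apart by `βᵐ⁺¹` and `γᵐ⁺¹` respectively, so the
constant can be improved by the factor `β/γ` forever. The bound is obtained by comparing each
string with the endpoints `u` and `v`. The comparison is harmless until the orbit of `u` under `φ`
hits `1` at a time `p`, or that of `v` hits `0` at a time `q`, and then costs the errors `γ⁻ᵖ` and
`γ⁻ᵠ`. These can be iterated away, since `γ⁻ᵖ + γ⁻ᵠ < β⁻ᵖ + β⁻ᵠ ≤ 1` by a comparison of two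
periodic orbits of the map `t ↦ βt + α` modulo the integers.
-/

/-! ### The lexicographic order and the shift space -/

section ShiftSpace

variable {k : ℕ} {u v x y : ℕ → ℕ}

lemma lexLe_iff_toLex_le : lexLe x y ↔ toLex x ≤ toLex y :=
  (le_iff_eq_or_lt (a := toLex x) (b := toLex y)).symm

lemma toLex_lt_iff_shft :
    toLex x < toLex y ↔ x 0 < y 0 ∨ x 0 = y 0 ∧ toLex (shft x) < toLex (shft y) := by
  constructor
  · rintro ⟨_ | m, hagree, hlt⟩
    · exact .inl hlt
    · exact .inr ⟨hagree 0 m.succ_pos, m, fun i hi => hagree (i + 1) (Nat.succ_lt_succ hi), hlt⟩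
  · rintro (hlt | ⟨h0, m, hagree, hlt⟩)
    · exact ⟨0, fun i hi => absurd hi i.not_lt_zero, hlt⟩
    · exact ⟨m + 1, fun | 0, _ => h0 | i + 1, hi => hagree i (Nat.lt_of_succ_lt_succ hi), hlt⟩

lemma toLex_le_iff_shft :
    toLex x ≤ toLex y ↔ x 0 < y 0 ∨ x 0 = y 0 ∧ toLex (shft x) ≤ toLex (shft y) := by
  have hneg : toLex x ≤ toLex y ↔ ¬(y 0 < x 0 ∨ y 0 = x 0 ∧ toLex (shft y) < toLex (shft x)) :=
    not_lt.symm.trans (not_congr toLex_lt_iff_shft)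
  have htail : toLex (shft x) ≤ toLex (shft y) ↔ ¬toLex (shft y) < toLex (shft x) := not_lt.symm
  rw [hneg, htail]
  grind

lemma shft_iterate_apply (n : ℕ) (x : ℕ → ℕ) (i : ℕ) : shft^[n] x i = x (n + i) := by
  induction n generalizing x with
  | zero => simp only [Function.iterate_zero, id, zero_add]
  | succ n ih => rw [Function.iterate_succ_apply, ih, shft, Nat.add_right_comm]

lemma exists_head_shft (j : ℕ) (y : ℕ → ℕ) : ∃ x : ℕ → ℕ, x 0 = j ∧ shft x = y :=
  ⟨fun n => n.casesOn j y, rfl, rfl⟩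

lemma mem_SigSet_iff :
    x ∈ SigSet k u v ↔
      x 0 < k ∧ toLex u ≤ toLex x ∧ toLex x ≤ toLex v ∧ shft x ∈ SigSet k u v := by
  simp only [SigSet, mem_ofPred_eq, lexLe_iff_toLex_le, shft]
  rw [← Nat.and_forall_add_one (p := fun i => x i < k),
    ← Nat.and_forall_add_one (p := fun n => toLex u ≤ toLex (shft^[n] x) ∧ _)]
  simp only [Function.iterate_zero, id, Function.iterate_succ_apply]
  tauto

lemma head_lt_of_mem (hx : x ∈ SigSet k u v) : x 0 < k := (mem_SigSet_iff.1 hx).1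

lemma left_le_of_mem (hx : x ∈ SigSet k u v) : toLex u ≤ toLex x := (mem_SigSet_iff.1 hx).2.1

lemma le_right_of_mem (hx : x ∈ SigSet k u v) : toLex x ≤ toLex v := (mem_SigSet_iff.1 hx).2.2.1

lemma shft_mem (hx : x ∈ SigSet k u v) : shft x ∈ SigSet k u v := (mem_SigSet_iff.1 hx).2.2.2

lemma shft_iterate_mem (hx : x ∈ SigSet k u v) (n : ℕ) : shft^[n] x ∈ SigSet k u v :=
  Function.Iterate.rec (· ∈ SigSet k u v) hx (fun _ => shft_mem) n

/-- The standing assumptions on the pair of strings bounding `Σ(u,v)`: both belong to `Σ(u,v)`,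
and they begin with the smallest and the largest letter of the alphabet, respectively. -/
structure IsExtremalPair (k : ℕ) (u v : ℕ → ℕ) : Prop where
  two_le : 2 ≤ k
  left_mem : u ∈ SigSet k u v
  right_mem : v ∈ SigSet k u v
  left_head : u 0 = 0
  right_head : v 0 = k - 1

namespace IsExtremalPair

variable (D : IsExtremalPair k u v)
include D

lemma shft_left_le (hx : x ∈ SigSet k u v) (h0 : x 0 = 0) :
    toLex (shft u) ≤ toLex (shft x) := by
  have := toLex_le_iff_shft.1 (left_le_of_mem hx)
  simpa only [D.left_head, h0, lt_irrefl, true_and, false_or] using this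

lemma shft_le_right (hx : x ∈ SigSet k u v) (h0 : x 0 = k - 1) :
    toLex (shft x) ≤ toLex (shft v) := by
  have := toLex_le_iff_shft.1 (le_right_of_mem hx)
  simpa only [D.right_head, h0, lt_irrefl, true_and, false_or] using this

lemma mem_of_shft_mem (hs : shft x ∈ SigSet k u v) (hk : x 0 < k)
    (hlow : x 0 = 0 → toLex (shft u) ≤ toLex (shft x))
    (hhigh : x 0 = k - 1 → toLex (shft x) ≤ toLex (shft v)) : x ∈ SigSet k u v := by
  refine mem_SigSet_iff.2 ⟨hk, toLex_le_iff_shft.2 ?_, toLex_le_iff_shft.2 ?_, hs⟩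
  · rw [D.left_head]
    exact (x 0).eq_zero_or_pos.symm.imp_right fun h0 => ⟨h0.symm, hlow h0⟩
  · rw [D.right_head]
    exact (Nat.le_sub_one_of_lt hk).lt_or_eq.imp_right fun h0 => ⟨h0, hhigh h0⟩

end IsExtremalPair

end ShiftSpace

/-! ### Counting words -/

section Words

variable {k n : ℕ} {u v x y : ℕ → ℕ}

/-- The word formed by the first `n` letters of a string. -/
def wordPrefix (n : ℕ) (x : ℕ → ℕ) : Fin n → ℕ := fun i => x i

/-- The words of length `n` in the language of `Σ(u,v)`. -/
def language (k : ℕ) (u v : ℕ → ℕ) (n : ℕ) : Set (Fin n → ℕ) := wordPrefix n '' SigSet k u v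

/-- The number of words of length `n` in the language of `Σ(u,v)` that lie strictly below the
prefix of `x` in the lexicographic order. -/
noncomputable def countBelow (k : ℕ) (u v : ℕ → ℕ) (n : ℕ) (x : ℕ → ℕ) : ℕ :=
  {w ∈ language k u v n | toLex w < toLex (wordPrefix n x)}.ncard

lemma wordPrefix_succ (n : ℕ) (x : ℕ → ℕ) :
    wordPrefix (n + 1) x = Fin.cons (x 0) (wordPrefix n (shft x)) :=
  funext <| Fin.cases rfl fun _ => rfl

lemma toLex_wordPrefix_mono (h : toLex x ≤ toLex y) :
    toLex (wordPrefix n x) ≤ toLex (wordPrefix n y) := by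
  contrapose! h
  obtain ⟨m, hagree, hlt⟩ := h
  exact ⟨m, fun i hi => hagree ⟨i, hi.trans m.isLt⟩ hi, hlt⟩

lemma wordPrefix_mem_language (hx : x ∈ SigSet k u v) : wordPrefix n x ∈ language k u v n :=
  mem_image_of_mem _ hx

lemma finite_language : (language k u v n).Finite := by
  refine (Set.Finite.pi' (t := fun _ : Fin n => Iio k) fun _ => finite_Iio k).subset ?_
  rintro _ ⟨x, hx, rfl⟩ i
  exact hx.1 i

lemma nWords_eq_ncard_language : nWords k u v n = (language k u v n).ncard := by
  rw [← Nat.card_coe_set_eq, nWords]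
  simp only [language, wordPrefix, Set.image, funext_iff]
  rfl

lemma finite_setOf_mem_language_and (P : (Fin n → ℕ) → Prop) :
    {w ∈ language k u v n | P w}.Finite :=
  finite_language.subset (sep_subset _ _)

lemma countBelow_le_nWords : countBelow k u v n x ≤ nWords k u v n :=
  nWords_eq_ncard_language ▸ ncard_le_ncard (sep_subset _ _) finite_language

lemma countBelow_zero : countBelow k u v 0 x = 0 := by
  rw [countBelow, ncard_eq_zero (finite_setOf_mem_language_and _), sep_eq_empty_iff_mem_false]
  rintro w - ⟨i, -⟩
  exact i.elim0

lemma countBelow_left : countBelow k u v n u = 0 := by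
  rw [countBelow, ncard_eq_zero (finite_setOf_mem_language_and _), sep_eq_empty_iff_mem_false]
  rintro _ ⟨x, hx, rfl⟩
  exact (toLex_wordPrefix_mono (left_le_of_mem hx)).not_gt

lemma nWords_eq_countBelow_right_add_one (hv : v ∈ SigSet k u v) :
    nWords k u v n = countBelow k u v n v + 1 := by
  rw [nWords_eq_ncard_language, countBelow, ← ncard_insert_of_notMem (a := wordPrefix n v)
    (fun h => h.2.false) (finite_setOf_mem_language_and _)]
  congr 1
  ext w
  constructor
  · rintro ⟨x, hx, rfl⟩
    exact (toLex_wordPrefix_mono (le_right_of_mem hx)).eq_or_lt.imp_right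
      fun hlt => ⟨wordPrefix_mem_language hx, hlt⟩
  · rintro (rfl | ⟨hw, -⟩)
    exacts [wordPrefix_mem_language hv, hw]

lemma nWords_pos (hv : v ∈ SigSet k u v) : 0 < nWords k u v n :=
  nWords_eq_countBelow_right_add_one hv ▸ Nat.succ_pos _

lemma nWords_add_le (m n : ℕ) : nWords k u v (m + n) ≤ nWords k u v m * nWords k u v n := by
  simp only [nWords_eq_ncard_language, ← ncard_prod]
  refine ncard_le_ncard_of_injOn (fun w => (w ∘ Fin.castAdd n, w ∘ Fin.natAdd m)) ?_ ?_
    (finite_language.prod finite_language)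
  · rintro _ ⟨x, hx, rfl⟩
    exact ⟨wordPrefix_mem_language hx, shft^[m] x, shft_iterate_mem hx m,
      funext fun i => shft_iterate_apply m x i⟩
  · intro w _ w' _ heq
    obtain ⟨hleft, hright⟩ := Prod.ext_iff.1 heq
    exact funext <| Fin.addCases (congrFun hleft) (congrFun hright)

lemma head_lt_or_eq_and_lt_iff {α : Type*} [LinearOrder α] {j k m : ℕ} {a b c w : α} (hk : 2 ≤ k)
    (hm : m < k) (hlow : m = 0 → b ≤ a) (hhigh : m = k - 1 → a ≤ c) :
    j < m ∨ j = m ∧ w < a ↔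
      (j < k ∧ (j = 0 → b ≤ w) ∧ (j = k - 1 → w ≤ c)) ∧ (j < m ∨ j = m ∧ w < a) ∨
        j = 0 ∧ w < b := by
  grind

lemma countBelow_succ_eq_ncard_prod :
    countBelow k u v (n + 1) x = {p : ℕ × (Fin n → ℕ) |
      (Fin.cons p.1 p.2 : Fin (n + 1) → ℕ) ∈ language k u v (n + 1) ∧
        (p.1 < x 0 ∨ p.1 = x 0 ∧ toLex p.2 < toLex (wordPrefix n (shft x)))}.ncard := by
  refine (ncard_preimage_of_injective_subset_range (s := {w | _ ∧ _})
    (Fin.consEquiv fun _ : Fin (n + 1) => ℕ).injective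
    fun w _ => (Fin.consEquiv _).surjective w).symm.trans ?_
  congr 1
  ext p
  refine and_congr_right fun _ => ?_
  rw [wordPrefix_succ]
  exact Fin.pi_lex_lt_cons_cons fun {_} => (· < ·)

namespace IsExtremalPair

variable (D : IsExtremalPair k u v)
include D

lemma cons_mem_language_iff {j : ℕ} {w : Fin n → ℕ} :
    (Fin.cons j w : Fin (n + 1) → ℕ) ∈ language k u v (n + 1) ↔
      j < k ∧ w ∈ language k u v n ∧ (j = 0 → toLex (wordPrefix n (shft u)) ≤ toLex w) ∧
        (j = k - 1 → toLex w ≤ toLex (wordPrefix n (shft v))) := by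
  constructor
  · rintro ⟨x, hx, hcons⟩
    rw [wordPrefix_succ] at hcons
    obtain ⟨rfl, rfl⟩ := Fin.cons_injective2 hcons
    exact ⟨head_lt_of_mem hx, wordPrefix_mem_language (shft_mem hx),
      fun h0 => toLex_wordPrefix_mono (D.shft_left_le hx h0),
      fun h0 => toLex_wordPrefix_mono (D.shft_le_right hx h0)⟩
  · rintro ⟨hj, ⟨y, hy, rfl⟩, hlow, hhigh⟩
    have hk := D.two_le
    suffices ∃ z ∈ SigSet k u v, wordPrefix n z = wordPrefix n y ∧
        (j = 0 → toLex (shft u) ≤ toLex z) ∧ (j = k - 1 → toLex z ≤ toLex (shft v)) by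
      obtain ⟨z, hz, hzy, hlow, hhigh⟩ := this
      obtain ⟨x, rfl, rfl⟩ := exists_head_shft j z
      exact ⟨x, D.mem_of_shft_mem hz hj hlow hhigh, by rw [wordPrefix_succ, hzy]⟩
    by_cases hu : j = 0 ∧ toLex y ≤ toLex (shft u)
    · exact ⟨shft u, shft_mem D.left_mem, (hlow hu.1).antisymm (toLex_wordPrefix_mono hu.2),
        fun _ => le_rfl, by omega⟩
    by_cases hv : j = k - 1 ∧ toLex (shft v) ≤ toLex y
    · exact ⟨shft v, shft_mem D.right_mem, (toLex_wordPrefix_mono hv.2).antisymm (hhigh hv.1),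
        by omega, fun _ => le_rfl⟩
    · exact ⟨y, hy, rfl, fun h0 => (lt_of_not_ge fun h => hu ⟨h0, h⟩).le,
        fun h0 => (lt_of_not_ge fun h => hv ⟨h0, h⟩).le⟩

-- Among the words `jw` with `w` in the language and `jw` below the prefix of `x`, exactly the `0w`
-- with `w` below the prefix of `σu` are not in the language.
lemma countBelow_succ_add (hx : x ∈ SigSet k u v) :
    countBelow k u v (n + 1) x + countBelow k u v n (shft u) =
      x 0 * nWords k u v n + countBelow k u v n (shft x) := by
  have hk := D.two_le
  have hxk := head_lt_of_mem hx
  have hlow (h0 : x 0 = 0) := toLex_wordPrefix_mono (n := n) (D.shft_left_le hx h0)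
  have hhigh (h0 : x 0 = k - 1) := toLex_wordPrefix_mono (n := n) (D.shft_le_right hx h0)
  have hsingleton (j : ℕ) (y : ℕ → ℕ) : countBelow k u v n y =
      ({j} ×ˢ {w ∈ language k u v n | toLex w < toLex (wordPrefix n y)}).ncard := by
    rw [ncard_prod, ncard_singleton, one_mul, countBelow]
  have hinitial : x 0 * nWords k u v n = (Iio (x 0) ×ˢ language k u v n).ncard := by
    rw [ncard_prod, ncard_Iio_nat, nWords_eq_ncard_language]
  have hfin {s : Set (ℕ × (Fin n → ℕ))} (hs : s ⊆ Iio k ×ˢ language k u v n) : s.Finite :=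
    ((finite_Iio k).prod finite_language).subset hs
  rw [countBelow_succ_eq_ncard_prod, hinitial, hsingleton 0, hsingleton (x 0),
    ← ncard_union_eq ?_ ?_ ?_, ← ncard_union_eq ?_ ?_ ?_]
  · congr 1
    ext ⟨j, w⟩
    simp only [D.cons_mem_language_iff, mem_union, mem_prod, mem_ofPred_eq, mem_singleton_iff,
      mem_Iio]
    by_cases hw : w ∈ language k u v n
    · simp only [hw, true_and, and_true]
      exact (head_lt_or_eq_and_lt_iff hk hxk hlow hhigh).symm
    · simp only [hw, false_and, and_false, or_self]
  · exact disjoint_left.2 fun p hp hp' => hp.1.ne hp'.1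
  · exact hfin fun p hp => ⟨hp.1.trans hxk, hp.2⟩
  · exact hfin fun p hp => ⟨hp.1.trans_lt hxk, hp.2.1⟩
  · refine disjoint_left.2 fun p hp hp' => ?_
    exact ((D.cons_mem_language_iff.1 hp.1).2.2.1 hp'.1).not_gt hp'.2.2
  · exact hfin fun p hp =>
      have h := D.cons_mem_language_iff.1 hp.1
      ⟨h.1, h.2.1⟩
  · exact hfin fun p hp => ⟨hp.1.trans_lt (by omega), hp.2.1⟩

lemma countBelow_succ_sub (hx : x ∈ SigSet k u v) (hy : y ∈ SigSet k u v) :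
    (countBelow k u v (n + 1) x : ℝ) - countBelow k u v (n + 1) y =
      (x 0 - y 0) * nWords k u v n +
        (countBelow k u v n (shft x) - countBelow k u v n (shft y)) := by
  have hx' : (countBelow k u v (n + 1) x + countBelow k u v n (shft u) : ℝ) =
      x 0 * nWords k u v n + countBelow k u v n (shft x) := mod_cast D.countBelow_succ_add hx
  have hy' : (countBelow k u v (n + 1) y + countBelow k u v n (shft u) : ℝ) =
      y 0 * nWords k u v n + countBelow k u v n (shft y) := mod_cast D.countBelow_succ_add hy
  linarith

end IsExtremalPair

end Words

/-! ### Exponential growth of the language -/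

section GrowthRate

variable {k : ℕ} {u v : ℕ → ℕ}

/-- The exponential growth rate of the number of words: `2` to the power of the entropy. -/
noncomputable def growthRate (k : ℕ) (u v : ℕ → ℕ) : ℝ := 2 ^ entS k u v

lemma growthRate_pos : 0 < growthRate k u v := Real.rpow_pos_of_pos two_pos _

lemma inv_growthRate_mem_Ioo (hgrowth : 1 < growthRate k u v) :
    (growthRate k u v)⁻¹ ∈ Ioo 0 1 :=
  ⟨inv_pos.2 growthRate_pos, inv_lt_one_of_one_lt₀ hgrowth⟩

lemma one_le_nWords (hv : v ∈ SigSet k u v) (n : ℕ) : (1 : ℝ) ≤ nWords k u v n :=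
  mod_cast nWords_pos hv

lemma subadditive_logb_nWords (hv : v ∈ SigSet k u v) :
    Subadditive fun n => Real.logb 2 (nWords k u v n) := by
  intro m n
  have hpos (n : ℕ) : (0 : ℝ) < nWords k u v n := mod_cast nWords_pos hv
  rw [← Real.logb_mul (hpos m).ne' (hpos n).ne']
  exact Real.logb_le_logb_of_le one_lt_two (hpos _) (mod_cast nWords_add_le m n)

lemma bddBelow_logb_nWords_div (hv : v ∈ SigSet k u v) :
    BddBelow (range fun n : ℕ => Real.logb 2 (nWords k u v n) / n) := by
  refine ⟨0, ?_⟩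
  rintro _ ⟨n, rfl⟩
  exact div_nonneg (Real.logb_nonneg one_lt_two (one_le_nWords hv n)) n.cast_nonneg

lemma entS_eq_lim (hv : v ∈ SigSet k u v) : entS k u v = (subadditive_logb_nWords hv).lim :=
  ((subadditive_logb_nWords hv).tendsto_lim (bddBelow_logb_nWords_div hv)).limsup_eq

lemma tendsto_logb_nWords_div (hv : v ∈ SigSet k u v) :
    Tendsto (fun n : ℕ => Real.logb 2 (nWords k u v n) / n) atTop (nhds (entS k u v)) :=
  entS_eq_lim hv ▸ (subadditive_logb_nWords hv).tendsto_lim (bddBelow_logb_nWords_div hv)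

lemma growthRate_pow_le_nWords (hv : v ∈ SigSet k u v) (n : ℕ) :
    growthRate k u v ^ n ≤ nWords k u v n := by
  rcases n.eq_zero_or_pos with rfl | hn
  · simpa only [pow_zero] using one_le_nWords hv 0
  · have hle := (subadditive_logb_nWords hv).lim_le_div (bddBelow_logb_nWords_div hv) hn.ne'
    rw [← entS_eq_lim hv, le_div_iff₀ (mod_cast hn),
      Real.le_logb_iff_rpow_le one_lt_two (mod_cast nWords_pos hv)] at hle
    rwa [growthRate, ← Real.rpow_natCast, ← Real.rpow_mul zero_le_two]

lemma le_growthRate_of_forall_pow_le (hv : v ∈ SigSet k u v) {β : ℝ} (hβ : 0 < β)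
    (hle : ∀ n, β ^ n ≤ nWords k u v n) : β ≤ growthRate k u v := by
  rw [growthRate, ← Real.logb_le_iff_le_rpow one_lt_two hβ]
  refine ge_of_tendsto (tendsto_logb_nWords_div hv) ?_
  filter_upwards [eventually_gt_atTop 0] with n hn
  rw [le_div_iff₀ (mod_cast hn), mul_comm, ← Real.logb_pow]
  exact Real.logb_le_logb_of_le one_lt_two (pow_pos hβ n) (hle n)

lemma eventually_nWords_le_pow (hv : v ∈ SigSet k u v) {ρ : ℝ} (hρ : growthRate k u v < ρ) :
    ∀ᶠ n in atTop, (nWords k u v n : ℝ) ≤ ρ ^ n := by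
  have hρ0 : 0 < ρ := growthRate_pos.trans hρ
  rw [growthRate, ← Real.lt_logb_iff_rpow_lt one_lt_two hρ0] at hρ
  filter_upwards [(tendsto_logb_nWords_div hv).eventually_lt_const hρ,
    eventually_gt_atTop 0] with n hlt hn
  rw [div_lt_iff₀ (mod_cast hn), mul_comm, ← Real.logb_pow] at hlt
  exact (Real.logb_le_logb one_lt_two (mod_cast nWords_pos hv) (pow_pos hρ0 n)).1 hlt.le

lemma summable_nWords_mul_pow (hv : v ∈ SigSet k u v) {t : ℝ} (ht : 0 < t)
    (hlt : t < (growthRate k u v)⁻¹) : Summable fun n => nWords k u v n * t ^ n := by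
  obtain ⟨ρ, hρ, hρt⟩ := exists_between ((lt_inv_comm₀ ht growthRate_pos).1 hlt)
  have hρ0 : 0 < ρ := growthRate_pos.trans hρ
  have hρt1 : ρ * t < 1 := by rwa [← lt_div_iff₀ ht, one_div]
  refine Summable.of_norm_bounded_eventually_nat
    (summable_geometric_of_lt_one (mul_pos hρ0 ht).le hρt1) ?_
  filter_upwards [eventually_nWords_le_pow hv hρ] with n hn
  rw [Real.norm_of_nonneg (by positivity), mul_pow]
  gcongr

lemma summable_countBelow_mul_pow (hv : v ∈ SigSet k u v) {x : ℕ → ℕ} {t : ℝ} (ht : 0 < t)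
    (hlt : t < (growthRate k u v)⁻¹) :
    Summable fun n => countBelow k u v n x * t ^ n :=
  .of_nonneg_of_le (fun _ => by positivity) (fun _ => by gcongr; exact countBelow_le_nWords)
    (summable_nWords_mul_pow hv ht hlt)

lemma geometric_le_tsum_nWords_mul_pow (hv : v ∈ SigSet k u v) {t : ℝ} (ht : 0 < t)
    (hlt : t < (growthRate k u v)⁻¹) :
    (1 - growthRate k u v * t)⁻¹ ≤ ∑' n, nWords k u v n * t ^ n := by
  have hlt1 : growthRate k u v * t < 1 := by
    rwa [← lt_inv_mul_iff₀ growthRate_pos, mul_one]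
  have hnonneg : 0 ≤ growthRate k u v * t := (mul_pos growthRate_pos ht).le
  rw [← tsum_geometric_of_lt_one hnonneg hlt1]
  refine (summable_geometric_of_lt_one hnonneg hlt1).tsum_le_tsum (fun n => ?_)
    (summable_nWords_mul_pow hv ht hlt)
  rw [mul_pow]
  gcongr
  exact growthRate_pow_le_nWords hv n

end GrowthRate

/-! ### Linearizations of the shift -/

section Linearization

variable {k n : ℕ} {u v x y : ℕ → ℕ} {t : ℝ}

/-- A semiconjugacy `φ` of the shift on `Σ(u,v)` to the map `t ↦ βt + φ(σu)` modulo the integers,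
with the letter `x₀` as integer part, which sends the endpoints `u` and `v` to `0` and `1`. -/
structure IsLinearization (k : ℕ) (u v : ℕ → ℕ) (β : ℝ) (φ : (ℕ → ℕ) → ℝ) : Prop extends
    IsExtremalPair k u v where
  one_lt : 1 < β
  nonneg : ∀ x ∈ SigSet k u v, 0 ≤ φ x
  le_one : ∀ x ∈ SigSet k u v, φ x ≤ 1
  step : ∀ x ∈ SigSet k u v, β * φ x + φ (shft u) = x 0 + φ (shft x)
  map_left : φ u = 0
  map_right : φ v = 1

/-- The series `∑ (xᵢ - uᵢ) tⁱ⁺¹`. Iterating the relation `βφ(x) + φ(σu) = x₀ + φ(σx)` shows that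
at `t = β⁻¹` it is the only candidate for a linearization of slope `β`. -/
noncomputable def digitSeries (u x : ℕ → ℕ) (t : ℝ) : ℝ := t * ∑' i, ((x i : ℝ) - u i) * t ^ i

lemma abs_digit_sub_le (hx : ∀ i, x i < k) (hy : ∀ i, y i < k) (i : ℕ) :
    |(x i : ℝ) - y i| ≤ k :=
  abs_sub_le_of_nonneg_of_le (x i).cast_nonneg (mod_cast (hx i).le) (y i).cast_nonneg
    (mod_cast (hy i).le)

lemma norm_digit_mul_pow_le (hx : ∀ i, x i < k) (hy : ∀ i, y i < k) {r : ℝ} (ht : t ∈ Icc 0 r)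
    (i : ℕ) : ‖((x i : ℝ) - y i) * t ^ i‖ ≤ k * r ^ i := by
  rw [norm_mul, Real.norm_eq_abs, Real.norm_of_nonneg (pow_nonneg ht.1 i)]
  exact mul_le_mul (abs_digit_sub_le hx hy i) (pow_le_pow_left₀ ht.1 ht.2 i) (pow_nonneg ht.1 i)
    k.cast_nonneg

lemma summable_norm_digit_mul_pow (hx : ∀ i, x i < k) (hy : ∀ i, y i < k) (ht : t ∈ Ico 0 1) :
    Summable fun i => ‖((x i : ℝ) - y i) * t ^ i‖ :=
  .of_nonneg_of_le (fun _ => norm_nonneg _) (norm_digit_mul_pow_le hx hy ⟨ht.1, le_rfl⟩)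
    ((summable_geometric_of_lt_one ht.1 ht.2).mul_left _)

lemma continuousOn_digitSeries (hx : ∀ i, x i < k) (hu : ∀ i, u i < k) {r : ℝ}
    (hr : r ∈ Ico 0 1) : ContinuousOn (digitSeries u x) (Icc 0 r) :=
  continuousOn_id.mul <| continuousOn_tsum (fun i => by fun_prop)
    ((summable_geometric_of_lt_one hr.1 hr.2).mul_left _)
    fun i _ ht => norm_digit_mul_pow_le hx hu ht i

lemma tendsto_digitSeries_nhdsLT (hx : ∀ i, x i < k) (hu : ∀ i, u i < k) (ht : t ∈ Ioo 0 1) :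
    Tendsto (digitSeries u x) (nhdsWithin t (Iio t)) (nhds (digitSeries u x t)) :=
  (continuousOn_digitSeries hx hu (Ioo_subset_Ico_self ht) t ⟨ht.1.le, le_rfl⟩).mono_left
    (nhdsWithin_le_of_mem (Icc_mem_nhdsLT ht.1))

lemma digitSeries_self : digitSeries u u t = 0 := by
  simp only [digitSeries, sub_self, zero_mul, tsum_zero, mul_zero]

lemma digitSeries_sub (hu : ∀ i, u i < k) (hx : ∀ i, x i < k) (hy : ∀ i, y i < k)
    (ht : t ∈ Ico 0 1) : digitSeries u x t - digitSeries u y t = digitSeries y x t := by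
  rw [digitSeries, digitSeries, ← mul_sub, ← (summable_norm_digit_mul_pow hx hu ht).of_norm.tsum_sub
    (summable_norm_digit_mul_pow hy hu ht).of_norm, digitSeries]
  congr 2
  ext i
  ring

lemma digitSeries_eq_head_add (hu : ∀ i, u i < k) (hx : ∀ i, x i < k) (ht : t ∈ Ico 0 1) :
    digitSeries u x t = t * ((x 0 - u 0) + digitSeries (shft u) (shft x) t) := by
  rw [digitSeries, (summable_norm_digit_mul_pow hx hu ht).of_norm.tsum_eq_zero_add, digitSeries,
    ← tsum_mul_left]
  simp only [pow_zero, mul_one, shft, pow_succ']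
  congr 3
  ext i
  ring

namespace IsExtremalPair

variable (D : IsExtremalPair k u v)
include D

lemma countBelow_sub_eq_sum (hx : x ∈ SigSet k u v) (hy : y ∈ SigSet k u v) :
    (countBelow k u v n x : ℝ) - countBelow k u v n y =
      ∑ i ∈ Finset.range n, ((x i : ℝ) - y i) * nWords k u v (n - 1 - i) := by
  induction n generalizing x y with
  | zero => simp only [countBelow_zero, sub_self, Finset.range_zero, Finset.sum_empty]
  | succ n ih =>
    have htail := ih (shft_mem hx) (shft_mem hy)
    rw [D.countBelow_succ_sub hx hy, htail, Finset.sum_range_succ', add_comm]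
    simp only [shft, Nat.sub_right_comm, Nat.add_sub_cancel, tsub_zero, Nat.sub_add_eq]

lemma tsum_countBelow_mul_pow (hx : x ∈ SigSet k u v) (ht : t ∈ Ioo 0 1)
    (hlt : t < (growthRate k u v)⁻¹) :
    ∑' n, countBelow k u v n x * t ^ n = digitSeries u x t * ∑' n, nWords k u v n * t ^ n := by
  rw [(summable_countBelow_mul_pow D.right_mem ht.1 hlt).tsum_eq_zero_add, countBelow_zero,
    Nat.cast_zero, zero_mul, zero_add, digitSeries, mul_assoc t,
    tsum_mul_tsum_eq_tsum_sum_range_of_summable_norm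
      (summable_norm_digit_mul_pow hx.1 D.left_mem.1 (Ioo_subset_Ico_self ht))
      (summable_nWords_mul_pow D.right_mem ht.1 hlt).norm, ← tsum_mul_left]
  congr 1
  ext n
  have hsum := D.countBelow_sub_eq_sum (n := n + 1) hx D.left_mem
  rw [countBelow_left, Nat.cast_zero, sub_zero, Nat.add_sub_cancel] at hsum
  rw [hsum, pow_succ', mul_left_comm, Finset.sum_mul]
  congr 1
  refine Finset.sum_congr rfl fun i hi => ?_
  rw [← Nat.add_sub_cancel' (Finset.mem_range_succ_iff.1 hi), pow_add, Nat.add_sub_cancel_left]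
  ring

lemma digitSeries_mem_Icc (hx : x ∈ SigSet k u v) (ht : t ∈ Ioo 0 1)
    (hlt : t < (growthRate k u v)⁻¹) : digitSeries u x t ∈ Icc 0 1 := by
  have hN := summable_nWords_mul_pow D.right_mem ht.1 hlt
  have hG : 0 < ∑' n, nWords k u v n * t ^ n :=
    hN.tsum_pos (fun n => by have := ht.1; positivity) 0
      (by simpa only [pow_zero, mul_one, Nat.cast_pos] using nWords_pos D.right_mem)
  have hprod := D.tsum_countBelow_mul_pow hx ht hlt
  constructor
  · refine nonneg_of_mul_nonneg_left (hprod ▸ tsum_nonneg fun n => ?_) hG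
    have := ht.1
    positivity
  · refine le_of_mul_le_mul_right ?_ hG
    rw [← hprod, one_mul]
    refine (summable_countBelow_mul_pow D.right_mem ht.1 hlt).tsum_le_tsum (fun n => ?_) hN
    have := ht.1
    gcongr
    exact countBelow_le_nWords

-- All words but the largest one lie below the prefix of `v`, so that
-- `(1 - digitSeries u v t) * ∑ Nₙ tⁿ = ∑ tⁿ`, while `∑ Nₙ tⁿ` dominates a geometric series.
lemma one_sub_digitSeries_right_le (ht : t ∈ Ioo 0 1) (hlt : t < (growthRate k u v)⁻¹) :
    1 - digitSeries u v t ≤ (1 - growthRate k u v * t) / (1 - t) := by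
  have hN := summable_nWords_mul_pow D.right_mem ht.1 hlt
  have hgeom : (1 - digitSeries u v t) * ∑' n, nWords k u v n * t ^ n = (1 - t)⁻¹ := by
    rw [sub_mul, one_mul, ← D.tsum_countBelow_mul_pow D.right_mem ht hlt,
      ← hN.tsum_sub (summable_countBelow_mul_pow D.right_mem ht.1 hlt),
      ← tsum_geometric_of_lt_one ht.1.le ht.2]
    congr 1
    ext n
    rw [nWords_eq_countBelow_right_add_one D.right_mem]
    push_cast
    ring
  have hlt1 : 0 < 1 - growthRate k u v * t := by
    rwa [sub_pos, ← lt_inv_mul_iff₀ growthRate_pos, mul_one]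
  have hle := mul_le_mul_of_nonneg_left (geometric_le_tsum_nWords_mul_pow D.right_mem ht.1 hlt)
    (sub_nonneg.2 (D.digitSeries_mem_Icc D.right_mem ht hlt).2)
  rw [hgeom, ← div_eq_mul_inv, div_le_iff₀ hlt1] at hle
  rwa [div_eq_inv_mul]

lemma digitSeries_growthRate_inv_mem_Icc (hgrowth : 1 < growthRate k u v)
    (hx : x ∈ SigSet k u v) : digitSeries u x (growthRate k u v)⁻¹ ∈ Icc 0 1 := by
  have hinv := inv_growthRate_mem_Ioo hgrowth
  refine isClosed_Icc.mem_of_tendsto (tendsto_digitSeries_nhdsLT hx.1 D.left_mem.1 hinv) ?_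
  filter_upwards [Ioo_mem_nhdsLT hinv.1] with t ht
  exact D.digitSeries_mem_Icc hx ⟨ht.1, ht.2.trans hinv.2⟩ ht.2

lemma digitSeries_right_growthRate_inv (hgrowth : 1 < growthRate k u v) :
    digitSeries u v (growthRate k u v)⁻¹ = 1 := by
  have hinv := inv_growthRate_mem_Ioo hgrowth
  refine (D.digitSeries_growthRate_inv_mem_Icc hgrowth D.right_mem).2.antisymm (sub_nonpos.1 ?_)
  have hbound : Tendsto (fun t => (1 - growthRate k u v * t) / (1 - t))
      (nhdsWithin (growthRate k u v)⁻¹ (Iio (growthRate k u v)⁻¹)) (nhds 0) := by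
    have hcont : ContinuousAt (fun t => (1 - growthRate k u v * t) / (1 - t))
        (growthRate k u v)⁻¹ :=
      ContinuousAt.div (by fun_prop) (by fun_prop) (sub_pos.2 hinv.2).ne'
    simpa only [ContinuousAt, mul_inv_cancel₀ growthRate_pos.ne', sub_self, zero_div]
      using hcont.tendsto.mono_left nhdsWithin_le_nhds
  refine le_of_tendsto_of_tendsto
    ((tendsto_digitSeries_nhdsLT D.right_mem.1 D.left_mem.1 hinv).const_sub 1) hbound ?_
  filter_upwards [Ioo_mem_nhdsLT hinv.1] with t ht
  exact D.one_sub_digitSeries_right_le ⟨ht.1, ht.2.trans hinv.2⟩ ht.2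

lemma isLinearization_digitSeries (hgrowth : 1 < growthRate k u v) :
    IsLinearization k u v (growthRate k u v) fun x => digitSeries u x (growthRate k u v)⁻¹ where
  toIsExtremalPair := D
  one_lt := hgrowth
  nonneg x hx := (D.digitSeries_growthRate_inv_mem_Icc hgrowth hx).1
  le_one x hx := (D.digitSeries_growthRate_inv_mem_Icc hgrowth hx).2
  step x hx := by
    have hinv := Ioo_subset_Ico_self (inv_growthRate_mem_Ioo hgrowth)
    rw [digitSeries_eq_head_add D.left_mem.1 hx.1 hinv, mul_inv_cancel_left₀ growthRate_pos.ne',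
      D.left_head, ← digitSeries_sub D.left_mem.1 (shft_mem hx).1 (shft_mem D.left_mem).1 hinv]
    push_cast
    ring
  map_left := digitSeries_self
  map_right := D.digitSeries_right_growthRate_inv hgrowth

end IsExtremalPair

end Linearization

/-! ### The maps `φ̄^{α,β}` -/

section PhiBar

variable {k n : ℕ} {u v x y : ℕ → ℕ} {α β s t : ℝ} {φ : (ℕ → ℕ) → ℝ}

lemma phiB_eq_max_min (hβ : 0 < β) (t : ℝ) : phiB α β t = max 0 (min 1 ((t - α) / β)) := by
  unfold phiB
  split_ifs with hlow hhigh
  · rw [max_eq_left]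
    exact (min_le_right _ _).trans (div_nonpos_of_nonpos_of_nonneg (sub_nonpos.2 hlow) hβ.le)
  · rw [min_eq_left ((one_le_div hβ).2 (by linarith)), max_eq_right zero_le_one]
  · rw [min_eq_right ((div_le_one hβ).2 (by linarith)),
      max_eq_right (div_nonneg (by linarith) hβ.le)]

lemma phiB_of_mem_Icc (hβ : 0 < β) (ht : t ∈ Icc α (α + β)) : phiB α β t = (t - α) / β := by
  rw [phiB_eq_max_min hβ, min_eq_right ((div_le_one hβ).2 (by linarith [ht.2])),
    max_eq_right (div_nonneg (by linarith [ht.1]) hβ.le)]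

lemma phiB_mem_Icc (hβ : 0 < β) (t : ℝ) : phiB α β t ∈ Icc 0 1 := by
  rw [phiB_eq_max_min hβ]
  exact ⟨le_max_left _ _, max_le zero_le_one (min_le_left _ _)⟩

lemma monotone_phiB (hβ : 0 < β) : Monotone (phiB α β) := by
  intro s t hst
  rw [phiB_eq_max_min hβ, phiB_eq_max_min hβ]
  gcongr

lemma abs_phiB_sub_phiB_le (hβ : 0 < β) (s t : ℝ) :
    |phiB α β s - phiB α β t| ≤ |s - t| / β := by
  rw [phiB_eq_max_min hβ, phiB_eq_max_min hβ, max_comm 0, max_comm 0]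
  refine (abs_max_sub_max_le_abs _ _ _).trans ((abs_min_sub_min_le_max _ _ _ _).trans ?_)
  rw [sub_self, abs_zero, ← sub_div, sub_sub_sub_cancel_right, abs_div, abs_of_pos hβ]
  exact max_le (by positivity) le_rfl

lemma continuous_phiB (hβ : 0 < β) : Continuous (phiB α β) := by
  rw [funext (phiB_eq_max_min hβ)]
  fun_prop

lemma phiBN_mem_Icc (hβ : 0 < β) (n : ℕ) (x : ℕ → ℕ) : phiBN α β n x ∈ Icc 0 1 := by
  cases n with
  | zero => exact left_mem_Icc.2 zero_le_one
  | succ n => exact phiB_mem_Icc hβ _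

lemma monotone_phiBN (hβ : 0 < β) (x : ℕ → ℕ) : Monotone fun n => phiBN α β n x := by
  refine monotone_nat_of_le_succ fun n => ?_
  induction n generalizing x with
  | zero => exact (phiBN_mem_Icc hβ 1 x).1
  | succ n ih => exact monotone_phiB hβ (add_le_add_right (ih (shft x)) _)

lemma tendsto_phiBN (hβ : 0 < β) (x : ℕ → ℕ) :
    Tendsto (fun n => phiBN α β n x) atTop (nhds (phiBInf α β x)) :=
  tendsto_atTop_ciSup (monotone_phiBN hβ x)
    ⟨1, forall_mem_range.2 fun n => (phiBN_mem_Icc hβ n x).2⟩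

lemma phiBInf_step (hβ : 0 < β) (x : ℕ → ℕ) :
    phiBInf α β x = phiB α β (x 0 + phiBInf α β (shft x)) :=
  tendsto_nhds_unique ((tendsto_add_atTop_iff_nat 1).2 (tendsto_phiBN hβ x))
    (((continuous_phiB hβ).tendsto _).comp ((tendsto_phiBN hβ (shft x)).const_add _))

lemma phiBInf_mem_Icc (hβ : 0 < β) (x : ℕ → ℕ) : phiBInf α β x ∈ Icc 0 1 :=
  phiBInf_step (α := α) hβ x ▸ phiB_mem_Icc hβ _

lemma head_add_le_head_add (hxy : toLex x ≤ toLex y) (hs : s ≤ 1) (ht : 0 ≤ t)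
    (hst : toLex (shft x) ≤ toLex (shft y) → s ≤ t) : x 0 + s ≤ y 0 + t := by
  obtain hlt | ⟨heq, hle⟩ := toLex_le_iff_shft.1 hxy
  · have : (x 0 : ℝ) + 1 ≤ y 0 := mod_cast hlt
    linarith
  · rw [heq]
    exact add_le_add_right (hst hle) _

lemma phiBN_mono_lex (hβ : 0 < β) (n : ℕ) (hxy : toLex x ≤ toLex y) :
    phiBN α β n x ≤ phiBN α β n y := by
  induction n generalizing x y with
  | zero => exact le_rfl
  | succ n ih =>
    exact monotone_phiB hβ <| head_add_le_head_add hxy (phiBN_mem_Icc hβ n _).2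
      (phiBN_mem_Icc hβ n _).1 ih

lemma phiBInf_mono_lex (hβ : 0 < β) (hxy : toLex x ≤ toLex y) :
    phiBInf α β x ≤ phiBInf α β y :=
  le_of_tendsto_of_tendsto' (tendsto_phiBN hβ x) (tendsto_phiBN hβ y)
    fun n => phiBN_mono_lex hβ n hxy

lemma head_add_phiBInf_mono_lex (hβ : 0 < β) (hxy : toLex x ≤ toLex y) :
    x 0 + phiBInf α β (shft x) ≤ y 0 + phiBInf α β (shft y) :=
  head_add_le_head_add hxy (phiBInf_mem_Icc hβ _).2 (phiBInf_mem_Icc hβ _).1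
    (phiBInf_mono_lex hβ)

lemma IsExtremalPair.isLinearization_phiBInf (D : IsExtremalPair k u v) (hβ : 1 < β)
    (hleft : phiBInf α β (shft u) = α) (hright : phiBInf α β (shft v) = α + β - k + 1) :
    IsLinearization k u v β (phiBInf α β) := by
  have hβ0 : 0 < β := zero_lt_one.trans hβ
  have hu : u 0 + phiBInf α β (shft u) = α := by rw [hleft, D.left_head, Nat.cast_zero, zero_add]
  have hv : v 0 + phiBInf α β (shft v) = α + β := by
    rw [hright, D.right_head, Nat.cast_pred (by have := D.two_le; omega)]
    ring
  have hlinear (x : ℕ → ℕ) (hx : x ∈ SigSet k u v) :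
      phiBInf α β x = (x 0 + phiBInf α β (shft x) - α) / β := by
    have hux := head_add_phiBInf_mono_lex (α := α) hβ0 (left_le_of_mem hx)
    have hxv := head_add_phiBInf_mono_lex (α := α) hβ0 (le_right_of_mem hx)
    rw [phiBInf_step hβ0, phiB_of_mem_Icc hβ0 ⟨hu.symm.trans_le hux, hxv.trans_eq hv⟩]
  refine ⟨D, hβ, fun x _ => (phiBInf_mem_Icc hβ0 x).1, fun x _ => (phiBInf_mem_Icc hβ0 x).2,
    fun x hx => ?_, ?_, ?_⟩
  · rw [hlinear x hx, mul_div_cancel₀ _ hβ0.ne', hleft, sub_add_cancel]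
  · rw [hlinear u D.left_mem, hu, sub_self, zero_div]
  · rw [hlinear v D.right_mem, hv, add_sub_cancel_left, div_self hβ0.ne']

namespace IsLinearization

variable (H : IsLinearization k u v β φ)
include H

lemma pos : 0 < β := zero_lt_one.trans H.one_lt

lemma eq_phiB (hx : x ∈ SigSet k u v) : φ x = phiB (φ (shft u)) β (x 0 + φ (shft x)) := by
  have hnonneg := mul_nonneg H.pos.le (H.nonneg x hx)
  have hle := mul_le_of_le_one_right H.pos.le (H.le_one x hx)
  rw [← H.step x hx, phiB_of_mem_Icc H.pos ⟨by linarith, by linarith⟩, add_sub_cancel_right,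
    mul_div_cancel_left₀ _ H.pos.ne']

lemma abs_phiBInf_sub_le (hx : x ∈ SigSet k u v) (n : ℕ) :
    |phiBInf (φ (shft u)) β x - φ x| ≤ β⁻¹ ^ n := by
  induction n generalizing x with
  | zero =>
    have hmem := phiBInf_mem_Icc (α := φ (shft u)) H.pos x
    exact abs_sub_le_of_nonneg_of_le hmem.1 hmem.2 (H.nonneg x hx) (H.le_one x hx)
  | succ n ih =>
    rw [phiBInf_step H.pos, H.eq_phiB hx]
    refine (abs_phiB_sub_phiB_le H.pos _ _).trans ?_
    rw [add_sub_add_left_eq_sub, pow_succ, ← div_eq_mul_inv]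
    exact div_le_div_of_nonneg_right (ih (shft_mem hx)) H.pos.le

lemma phiBInf_eq (hx : x ∈ SigSet k u v) : phiBInf (φ (shft u)) β x = φ x := by
  have hlim := tendsto_pow_atTop_nhds_zero_of_lt_one (inv_nonneg.2 H.pos.le)
    (inv_lt_one_of_one_lt₀ H.one_lt)
  exact sub_eq_zero.1 (abs_nonpos_iff.1 (ge_of_tendsto' hlim (H.abs_phiBInf_sub_le hx)))

lemma map_shft_right : φ (shft v) = φ (shft u) + β - k + 1 := by
  have hstep := H.step v H.right_mem
  rw [H.map_right, H.right_head, Nat.cast_pred (by have := H.two_le; omega)] at hstep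
  linarith

lemma exists_phiBInf_eq : ∃ α ∈ Icc (0 : ℝ) 1,
    phiBInf α β (shft u) = α ∧ phiBInf α β (shft v) = α + β - k + 1 := by
  have hu := shft_mem H.left_mem
  exact ⟨φ (shft u), ⟨H.nonneg _ hu, H.le_one _ hu⟩, H.phiBInf_eq hu,
    (H.phiBInf_eq (shft_mem H.right_mem)).trans H.map_shft_right⟩

lemma pow_succ_mul_sub (hx : x ∈ SigSet k u v) (hy : y ∈ SigSet k u v) (n : ℕ) :
    β ^ (n + 1) * (φ y - φ x) = β ^ n * (y 0 - x 0 + (φ (shft y) - φ (shft x))) := by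
  rw [pow_succ, mul_assoc]
  congr 1
  linarith [H.step x hx, H.step y hy]

lemma pow_mul_sub_le_countBelow_sub_add_one (hx : x ∈ SigSet k u v) (hy : y ∈ SigSet k u v)
    (hxy : toLex x ≤ toLex y) :
    β ^ n * (φ y - φ x) ≤ countBelow k u v n y - countBelow k u v n x + 1 := by
  induction n generalizing x y with
  | zero =>
    simp only [pow_zero, countBelow_zero, Nat.cast_zero]
    linarith [H.nonneg x hx, H.le_one y hy]
  | succ n ih =>
    rw [H.pow_succ_mul_sub hx hy, H.countBelow_succ_sub hy hx]
    obtain hlt | ⟨heq, hle⟩ := toLex_le_iff_shft.1 hxy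
    · have hu := H.left_mem
      have hv := H.right_mem
      have hN : (nWords k u v n : ℝ) = countBelow k u v n v + 1 :=
        mod_cast nWords_eq_countBelow_right_add_one hv
      have huv := ih hu hv (left_le_of_mem hv)
      have hxv := ih (shft_mem hx) hv (le_right_of_mem (shft_mem hx))
      have huy := ih hu (shft_mem hy) (left_le_of_mem (shft_mem hy))
      rw [H.map_left, countBelow_left] at huv huy
      rw [H.map_right] at huv hxv
      have hhead : 0 ≤ ((y 0 : ℝ) - x 0 - 1) * (nWords k u v n - β ^ n) :=
        mul_nonneg (by linarith [show (x 0 : ℝ) + 1 ≤ y 0 from mod_cast hlt])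
          (by push_cast at huv; linarith)
      push_cast at huy
      linarith
    · rw [heq, sub_self, zero_mul, zero_add, zero_add]
      exact ih (shft_mem hx) (shft_mem hy) hle

lemma le_growthRate : β ≤ growthRate k u v := by
  refine le_growthRate_of_forall_pow_le H.right_mem H.pos fun n => ?_
  have hle := H.pow_mul_sub_le_countBelow_sub_add_one (n := n) H.left_mem H.right_mem
    (left_le_of_mem H.right_mem)
  rwa [H.map_left, H.map_right, countBelow_left, sub_zero, mul_one, Nat.cast_zero, sub_zero,
    ← Nat.cast_succ, Nat.succ_eq_add_one, ← nWords_eq_countBelow_right_add_one H.right_mem] at hle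

end IsLinearization

end PhiBar

/-! ### Periodic orbits of `t ↦ βt + α` modulo the integers -/

section PeriodicOrbits

variable {α β γ α' c : ℝ} {d f g x y z : ℕ → ℝ} {p q : ℕ}

/-- The sequence `x` is an orbit of the map `t ↦ βt + α` modulo the integers. The representatives
of the classes are left free, so that `0` and `1` are different points of the same class. -/
def IsOrbitModOne (β α : ℝ) (x : ℕ → ℝ) : Prop :=
  ∀ l, ∃ a : ℤ, x (l + 1) = β * x l + α - a

lemma IsOrbitModOne.comp_add_left (hx : IsOrbitModOne β α x) (l : ℕ) :
    IsOrbitModOne β α fun i => x (l + i) :=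
  fun i => hx (l + i)

lemma IsOrbitModOne.sub (hx : IsOrbitModOne β α x) (hy : IsOrbitModOne β α' y) :
    IsOrbitModOne β (α - α') fun i => x i - y i := by
  intro i
  obtain ⟨a, ha⟩ := hx i
  obtain ⟨b, hb⟩ := hy i
  refine ⟨a - b, ?_⟩
  push_cast
  linarith

lemma IsOrbitModOne.comp_mod (hf : IsOrbitModOne β α f) (hp : 0 < p)
    (hclose : ∃ a : ℤ, f p = f 0 + a) : IsOrbitModOne β α fun l => f (l % p) := by
  intro l
  beta_reduce
  rw [← Nat.mod_add_mod]
  obtain ⟨b, hb⟩ := hf (l % p)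
  obtain hend | hlt := (show l % p + 1 ≤ p from Nat.mod_lt l hp).eq_or_lt
  · obtain ⟨a, ha⟩ := hclose
    refine ⟨a + b, ?_⟩
    rw [hend] at hb
    rw [hend, Nat.mod_self]
    push_cast
    linarith
  · exact ⟨b, by rw [Nat.mod_eq_of_lt hlt, hb]⟩

lemma IsOrbitModOne.exists_first_carry (hd : IsOrbitModOne β 0 d) (hβ : 1 < β)
    (hle : ∀ i, d i ≤ 1) (h0 : 0 < d 0) :
    ∃ n, (∀ i ≤ n, d i = β ^ i * d 0) ∧ 1 + d (n + 1) ≤ β ^ (n + 1) * d 0 := by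
  classical
  have hcarry : ∃ i, d i ≠ β ^ i * d 0 := by
    by_contra! hfree
    obtain ⟨n, hn⟩ := pow_unbounded_of_one_lt (1 / d 0) hβ
    rw [div_lt_iff₀ h0, ← hfree n] at hn
    exact (hle n).not_gt hn
  obtain ⟨n, hn⟩ : ∃ n, Nat.find hcarry = n + 1 := Nat.exists_eq_succ_of_ne_zero fun hzero =>
    Nat.find_spec hcarry (by rw [hzero, pow_zero, one_mul])
  have hbefore (i : ℕ) (hi : i ≤ n) : d i = β ^ i * d 0 :=
    not_not.1 (Nat.find_min hcarry (by omega))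
  have hat : d (n + 1) ≠ β ^ (n + 1) * d 0 := hn ▸ Nat.find_spec hcarry
  refine ⟨n, hbefore, ?_⟩
  obtain ⟨e, he⟩ := hd n
  rw [hbefore n le_rfl, ← mul_assoc, ← pow_succ', add_zero] at he
  have hpos : 0 < β ^ (n + 1) * d 0 := by positivity
  have hlower : -1 < e := by
    have : (-1 : ℝ) < e := by linarith [hle (n + 1)]
    exact_mod_cast this
  have hne : e ≠ 0 := by
    rintro rfl
    exact hat (by rw [he, Int.cast_zero, sub_zero])
  have hone : (1 : ℝ) ≤ e := mod_cast (by omega : 1 ≤ e)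
  linarith

lemma exists_minimal_pos_sub (hx : (range x).Finite) (hy : (range y).Finite)
    (h0 : x 0 < y 0) :
    ∃ l j, x l < y j ∧ ∀ l' j', x l' < y j' → y j - x l ≤ y j' - x l' := by
  have hfin : {r ∈ range x ×ˢ range y | r.1 < r.2}.Finite := (hx.prod hy).sep _
  obtain ⟨⟨_, _⟩, ⟨⟨⟨l, rfl⟩, j, rfl⟩, hlt⟩, hmin⟩ := exists_min_image _ (fun r => r.2 - r.1) hfin
    ⟨(x 0, y 0), ⟨mem_range_self 0, mem_range_self 0⟩, h0⟩
  exact ⟨l, j, hlt, fun l' j' h =>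
    hmin (x l', y j') ⟨⟨mem_range_self l', mem_range_self j'⟩, h⟩⟩

lemma finite_range_of_periodic (hx : Function.Periodic x p) (hp : 0 < p) : (range x).Finite :=
  ((finite_lt_nat p).image x).subset <| range_subset_iff.2 fun l =>
    ⟨l % p, Nat.mod_lt l hp, hx.map_mod_nat l⟩

lemma pow_succ_mul_le_of_periodic (hz : Function.Periodic z q) (hq : 0 < q) (hβ : 1 ≤ β)
    (hc : 0 ≤ c) (hmin : ∀ i, c ≤ z i) {j n : ℕ} (hgrowth : ∀ i ≤ n, β ^ i * c ≤ z (j + i)) :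
    β ^ (n + 1) * c ≤ z (j + (n + 1)) * β ^ q := by
  obtain hqn | hnq := le_or_gt q (n + 1)
  · obtain ⟨i, hi⟩ := Nat.exists_eq_add_of_le' hqn
    rw [hi, ← add_assoc, hz, pow_add, mul_right_comm]
    exact mul_le_mul_of_nonneg_right (hgrowth i (by omega)) (by positivity)
  · rw [mul_comm]
    gcongr
    · exact hc.trans (hmin _)
    · exact hmin _

-- Follow the pair of times with the least positive difference up to its first carry. Before the
-- carry the difference is multiplied by `β` at each step; the carry adds `1` to the sum of the
-- gaps `y - 0` and `1 - x`, each of which has grown for at most one period.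
lemma inv_pow_add_inv_pow_le_one_of_periodic (hβ : 1 < β) (hp : 0 < p) (hq : 0 < q)
    (hx : IsOrbitModOne β α x) (hy : IsOrbitModOne β α y)
    (hxp : Function.Periodic x p) (hyq : Function.Periodic y q) (hx0 : x 0 = 0) (hy0 : y 0 = 1)
    (hx_mem : ∀ i, x i ∈ Ico 0 1) (hy_mem : ∀ i, y i ∈ Ioc 0 1) :
    β⁻¹ ^ p + β⁻¹ ^ q ≤ 1 := by
  have hβ0 : 0 < β := zero_lt_one.trans hβ
  obtain ⟨l, j, hlt, hmin⟩ := exists_minimal_pos_sub (finite_range_of_periodic hxp hp)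
    (finite_range_of_periodic hyq hq) (by rw [hx0, hy0]; exact zero_lt_one)
  have hd : IsOrbitModOne β 0 fun i => y (j + i) - x (l + i) :=
    sub_self α ▸ (hy.comp_add_left j).sub (hx.comp_add_left l)
  obtain ⟨n, hbefore, hcarry⟩ := hd.exists_first_carry hβ
    (fun i => by linarith [(hx_mem (l + i)).1, (hy_mem (j + i)).2]) (sub_pos.2 hlt)
  simp only [add_zero] at hbefore hcarry
  set c := y j - x l
  have hc : 0 < c := sub_pos.2 hlt
  have hygap := pow_succ_mul_le_of_periodic hyq hq hβ.le hc.le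
    (fun i => by simpa only [hx0, sub_zero] using hmin 0 i (hx0 ▸ (hy_mem i).1))
    fun i hi => by linarith [hbefore i hi, (hx_mem (l + i)).1]
  have hxgap := pow_succ_mul_le_of_periodic (z := fun i => 1 - x i)
    (fun i => congrArg (1 - ·) (hxp i)) hp hβ.le hc.le
    (fun i => by simpa only [hy0] using hmin i 0 (hy0 ▸ (hx_mem i).2))
    fun i hi => by linarith [hbefore i hi, (hy_mem (j + i)).2]
  rw [← div_le_iff₀ (pow_pos hβ0 _), div_eq_mul_inv, ← inv_pow] at hygap hxgap
  refine le_of_mul_le_mul_left (a := β ^ (n + 1) * c) ?_ (mul_pos (pow_pos hβ0 _) hc)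
  rw [mul_add, mul_one]
  linarith

lemma inv_pow_add_inv_pow_le_one_of_return (hβ : 1 < β) (hp : 0 < p) (hq : 0 < q)
    (hf : IsOrbitModOne β α f) (hg : IsOrbitModOne β α g)
    (hf0 : f 0 = 0) (hg0 : g 0 = 1) (hfp : f p = 1) (hgq : g q = 0)
    (hf_mem : ∀ i < p, f i ∈ Ico 0 1) (hg_mem : ∀ i < q, g i ∈ Ioc 0 1) :
    β⁻¹ ^ p + β⁻¹ ^ q ≤ 1 :=
  inv_pow_add_inv_pow_le_one_of_periodic hβ hp hq
    (hf.comp_mod hp ⟨1, by rw [hf0, hfp, Int.cast_one, zero_add]⟩)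
    (hg.comp_mod hq ⟨-1, by rw [hg0, hgq, Int.cast_neg, Int.cast_one, add_neg_cancel]⟩)
    (fun l => congrArg f (Nat.add_mod_right l p)) (fun l => congrArg g (Nat.add_mod_right l q))
    (by rwa [Nat.zero_mod]) (by rwa [Nat.zero_mod])
    (fun l => hf_mem _ (Nat.mod_lt l hp)) (fun l => hg_mem _ (Nat.mod_lt l hq))

lemma exists_first_return (hf : ∃ i, 0 < i ∧ f i = c) :
    ∃ p, 0 < p ∧ f p = c ∧ ∀ i, 0 < i → i < p → f i ≠ c := by
  classical
  exact ⟨Nat.find hf, (Nat.find_spec hf).1, (Nat.find_spec hf).2,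
    fun i hi hlt h => Nat.find_min hf hlt ⟨hi, h⟩⟩

lemma exists_return_times (hβ : 1 < β) (hγ : β < γ)
    (hf : IsOrbitModOne β α f) (hg : IsOrbitModOne β α g) (hf0 : f 0 = 0) (hg0 : g 0 = 1)
    (hf_mem : ∀ i, f i ∈ Icc 0 1) (hg_mem : ∀ i, g i ∈ Icc 0 1) :
    ∃ p q, (∀ i, 0 < i → i < p → f i < 1) ∧ (∀ i, 0 < i → i < q → 0 < g i) ∧
      γ⁻¹ ^ p + γ⁻¹ ^ q < 1 := by
  have hγ0 : 0 < γ⁻¹ := inv_pos.2 (zero_lt_one.trans (hβ.trans hγ))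
  have hγ1 : γ⁻¹ < 1 := inv_lt_one_of_one_lt₀ (hβ.trans hγ)
  obtain ⟨n, hn⟩ := exists_pow_lt_of_lt_one (sub_pos.2 hγ1) hγ1
  by_cases hfret : ∃ i, 0 < i ∧ f i = 1
  · by_cases hgret : ∃ i, 0 < i ∧ g i = 0
    · obtain ⟨p, hp, hfp, hfne⟩ := exists_first_return hfret
      obtain ⟨q, hq, hgq, hgne⟩ := exists_first_return hgret
      have hflt (i : ℕ) (hi : 0 < i) (hip : i < p) : f i < 1 :=
        (hf_mem i).2.lt_of_ne (hfne i hi hip)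
      have hgpos (i : ℕ) (hi : 0 < i) (hiq : i < q) : 0 < g i :=
        (hg_mem i).1.lt_of_ne' (hgne i hi hiq)
      have hle := inv_pow_add_inv_pow_le_one_of_return hβ hp hq hf hg hf0 hg0 hfp hgq
        (fun i hip => ⟨(hf_mem i).1, i.eq_zero_or_pos.elim
          (fun hi => by rw [hi, hf0]; exact zero_lt_one) fun hi => hflt i hi hip⟩)
        (fun i hiq => ⟨i.eq_zero_or_pos.elim
          (fun hi => by rw [hi, hg0]; exact zero_lt_one) fun hi => hgpos i hi hiq, (hg_mem i).2⟩)
      have hinv : γ⁻¹ < β⁻¹ := inv_strictAnti₀ (zero_lt_one.trans hβ) hγ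
      exact ⟨p, q, hflt, hgpos, (add_lt_add (pow_lt_pow_left₀ hinv hγ0.le hp.ne')
        (pow_lt_pow_left₀ hinv hγ0.le hq.ne')).trans_le hle⟩
    · push Not at hgret
      exact ⟨1, n, fun i hi hi1 => absurd hi (by omega),
        fun i hi _ => (hg_mem i).1.lt_of_ne' (hgret i hi), by rw [pow_one]; linarith⟩
  · push Not at hfret
    exact ⟨n, 1, fun i hi _ => (hf_mem i).2.lt_of_ne (hfret i hi),
      fun i hi hi1 => absurd hi (by omega), by rw [pow_one]; linarith⟩

lemma eventually_forall_le_mul {a b : ℕ → ℝ} (hb : ∀ i, 0 < i → i < p → 0 < b i) :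
    ∀ᶠ C in atTop, ∀ i, 0 < i → i < p → a i ≤ C * b i := by
  have hfin : (Ioo 0 p).Finite := finite_Ioo 0 p
  have hall : ∀ᶠ C : ℝ in atTop, ∀ i ∈ Ioo 0 p, a i ≤ C * b i :=
    hfin.eventually_all.2 fun i hi =>
      (tendsto_id.atTop_mul_const (hb i hi.1 hi.2)).eventually_ge_atTop (a i)
  filter_upwards [hall] with C hC i hi hip using hC i ⟨hi, hip⟩

end PeriodicOrbits

/-! ### Uniqueness of the slope -/

section SlopeUniqueness

variable {k m p q : ℕ} {u v x y : ℕ → ℕ} {β γ C z w : ℝ} {φ ψ : (ℕ → ℕ) → ℝ}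

/-- The function `ψ` on `Σ(u,v)` is at most `C` times `φ`, and `1 - ψ` at most `C` times `1 - φ`,
up to the additive errors `z` and `w`. -/
def IsDominated (k : ℕ) (u v : ℕ → ℕ) (φ ψ : (ℕ → ℕ) → ℝ) (C z w : ℝ) : Prop :=
  ∀ x ∈ SigSet k u v, ψ x ≤ C * φ x + z ∧ 1 - ψ x ≤ C * (1 - φ x) + w

namespace IsLinearization

lemma isOrbitModOne (H : IsLinearization k u v β φ) (hx : x ∈ SigSet k u v) :
    IsOrbitModOne β (φ (shft u)) fun i => φ (shft^[i] x) := by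
  intro i
  refine ⟨shft^[i] x 0, ?_⟩
  beta_reduce
  rw [Function.iterate_succ_apply', H.step _ (shft_iterate_mem hx i)]
  push_cast
  ring

lemma map_iterate_mem_Icc (H : IsLinearization k u v β φ) (hx : x ∈ SigSet k u v) (i : ℕ) :
    φ (shft^[i] x) ∈ Icc 0 1 :=
  ⟨H.nonneg _ (shft_iterate_mem hx i), H.le_one _ (shft_iterate_mem hx i)⟩

lemma pow_succ_mul_sub_of_agree (H : IsLinearization k u v β φ) (hx : x ∈ SigSet k u v)
    (hy : y ∈ SigSet k u v) (hagree : ∀ i < m, x i = y i) :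
    β ^ (m + 1) * (φ y - φ x) = y m - x m + (φ (shft^[m + 1] y) - φ (shft^[m + 1] x)) := by
  induction m generalizing x y with
  | zero =>
    rw [H.pow_succ_mul_sub hx hy, pow_zero, one_mul]
    rfl
  | succ m ih =>
    rw [H.pow_succ_mul_sub hx hy, hagree 0 m.succ_pos, sub_self, zero_add,
      ih (shft_mem hx) (shft_mem hy) fun i hi => hagree (i + 1) (Nat.succ_lt_succ hi)]
    rfl

lemma le_pow_succ_mul_sub (H : IsLinearization k u v β φ) (hx : x ∈ SigSet k u v)
    (hy : y ∈ SigSet k u v) (hagree : ∀ i < m, x i = y i) (hlt : x m < y m) :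
    1 - φ (shft^[m + 1] x) + φ (shft^[m + 1] y) ≤ β ^ (m + 1) * (φ y - φ x) := by
  have : (x m : ℝ) + 1 ≤ y m := mod_cast hlt
  rw [H.pow_succ_mul_sub_of_agree hx hy hagree]
  linarith

lemma sub_nonneg_of_toLex_le (H : IsLinearization k u v β φ) (hx : x ∈ SigSet k u v)
    (hy : y ∈ SigSet k u v) (hxy : toLex x ≤ toLex y) : 0 ≤ φ y - φ x := by
  obtain rfl | ⟨m, hagree, hlt⟩ := lexLe_iff_toLex_le.2 hxy
  · rw [sub_self]
  · refine nonneg_of_mul_nonneg_right ?_ (pow_pos H.pos (m + 1))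
    have hle := H.le_pow_succ_mul_sub hx hy hagree hlt
    linarith [(H.map_iterate_mem_Icc hx (m + 1)).2, (H.map_iterate_mem_Icc hy (m + 1)).1]

end IsLinearization

namespace IsDominated

lemma pow_succ_mul_sub_le (hdom : IsDominated k u v φ ψ C z w)
    (H : IsLinearization k u v β φ) (H' : IsLinearization k u v γ ψ) (hC : 1 ≤ C)
    (hx : x ∈ SigSet k u v) (hy : y ∈ SigSet k u v)
    (hagree : ∀ i < m, x i = y i) (hlt : x m < y m) :
    γ ^ (m + 1) * (ψ y - ψ x) ≤ C * (β ^ (m + 1) * (φ y - φ x)) + (z + w) := by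
  rw [H.pow_succ_mul_sub_of_agree hx hy hagree, H'.pow_succ_mul_sub_of_agree hx hy hagree]
  have hxm := (hdom _ (shft_iterate_mem hx (m + 1))).2
  have hym := (hdom _ (shft_iterate_mem hy (m + 1))).1
  have hdigit : (x m : ℝ) + 1 ≤ y m := mod_cast hlt
  have hdiff := mul_nonneg (sub_nonneg.2 hC) (sub_nonneg.2 hdigit)
  linarith

-- If the first difference `m` occurs late, the error has been divided by `γ ^ (m + 1)`; if it
-- occurs early, the constant `C` is large enough to make the bound trivial.
lemma sub_le_add (hdom : IsDominated k u v φ ψ C z w)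
    (H : IsLinearization k u v β φ) (H' : IsLinearization k u v γ ψ) (hβγ : β ≤ γ) (hC : 1 ≤ C)
    (hzw : 0 ≤ z + w) (hx : x ∈ SigSet k u v) (hy : y ∈ SigSet k u v) (hxy : toLex x ≤ toLex y)
    (hearly : ∀ i, 0 < i → i < p → β ^ i ≤ C * (1 - φ (shft^[i] x) + φ (shft^[i] y))) :
    ψ y - ψ x ≤ C * (φ y - φ x) + γ⁻¹ ^ p * (z + w) := by
  have hC0 : 0 ≤ C := zero_le_one.trans hC
  have hγ := H'.pos
  have hnonneg := H.sub_nonneg_of_toLex_le hx hy hxy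
  obtain rfl | ⟨m, hagree, hlt⟩ := lexLe_iff_toLex_le.2 hxy
  · simp only [sub_self, mul_zero, zero_add]
    positivity
  obtain hmp | hpm := lt_or_ge (m + 1) p
  · have hle : β ^ (m + 1) ≤ β ^ (m + 1) * (C * (φ y - φ x)) := by
      rw [mul_left_comm]
      exact (hearly _ m.succ_pos hmp).trans
        (mul_le_mul_of_nonneg_left (H.le_pow_succ_mul_sub hx hy hagree hlt) hC0)
    have hone : 1 ≤ C * (φ y - φ x) := (le_mul_iff_one_le_right (pow_pos H.pos _)).1 hle
    have herr : 0 ≤ γ⁻¹ ^ p * (z + w) := by positivity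
    linarith [H'.nonneg x hx, H'.le_one y hy]
  · refine le_of_mul_le_mul_left ?_ (pow_pos hγ (m + 1))
    calc γ ^ (m + 1) * (ψ y - ψ x)
        ≤ C * (β ^ (m + 1) * (φ y - φ x)) + 1 * (z + w) := by
          rw [one_mul]
          exact hdom.pow_succ_mul_sub_le H H' hC hx hy hagree hlt
      _ ≤ C * (γ ^ (m + 1) * (φ y - φ x)) + γ ^ (m + 1) * γ⁻¹ ^ p * (z + w) := by
          have hβ := H.pos.le
          gcongr
          rw [inv_pow, ← div_eq_mul_inv, one_le_div (pow_pos hγ p)]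
          exact pow_le_pow_right₀ H'.one_lt.le hpm
      _ = γ ^ (m + 1) * (C * (φ y - φ x) + γ⁻¹ ^ p * (z + w)) := by ring

lemma sub_le_mul_div (hdom : IsDominated k u v φ ψ C 0 0)
    (H : IsLinearization k u v β φ) (H' : IsLinearization k u v γ ψ) (hβγ : β ≤ γ) (hC : 1 ≤ C)
    (hx : x ∈ SigSet k u v) (hy : y ∈ SigSet k u v) (hxy : toLex x ≤ toLex y) :
    ψ y - ψ x ≤ C * (β / γ) * (φ y - φ x) := by
  have hβ := H.pos
  have hγ := H'.pos
  have hnonneg := H.sub_nonneg_of_toLex_le hx hy hxy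
  obtain rfl | ⟨m, hagree, hlt⟩ := lexLe_iff_toLex_le.2 hxy
  · simp only [sub_self, mul_zero, le_refl]
  have hle := hdom.pow_succ_mul_sub_le H H' hC hx hy hagree hlt
  rw [add_zero, add_zero, mul_comm, ← le_div_iff₀ (pow_pos hγ _)] at hle
  calc ψ y - ψ x ≤ C * (β / γ) ^ (m + 1) * (φ y - φ x) := by
        rw [div_pow]
        exact hle.trans_eq (by ring)
    _ ≤ C * (β / γ) * (φ y - φ x) := by
        gcongr
        exact pow_le_of_le_one (by positivity) ((div_le_one hγ).2 hβγ) m.succ_ne_zero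

lemma of_endpoints (H : IsLinearization k u v β φ) (H' : IsLinearization k u v γ ψ)
    (hleft : ∀ x ∈ SigSet k u v, ψ x - ψ u ≤ C * (φ x - φ u) + z)
    (hright : ∀ x ∈ SigSet k u v, ψ v - ψ x ≤ C * (φ v - φ x) + w) :
    IsDominated k u v φ ψ C z w := by
  intro x hx
  have hux := hleft x hx
  have hxv := hright x hx
  rw [H.map_left, H'.map_left, sub_zero, sub_zero] at hux
  rw [H.map_right, H'.map_right] at hxv
  exact ⟨hux, hxv⟩

lemma contract (hdom : IsDominated k u v φ ψ C z w)
    (H : IsLinearization k u v β φ) (H' : IsLinearization k u v γ ψ) (hβγ : β ≤ γ) (hC : 1 ≤ C)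
    (hzw : 0 ≤ z + w) (hp : ∀ i, 0 < i → i < p → β ^ i ≤ C * (1 - φ (shft^[i] u)))
    (hq : ∀ i, 0 < i → i < q → β ^ i ≤ C * φ (shft^[i] v)) :
    IsDominated k u v φ ψ C (γ⁻¹ ^ p * (z + w)) (γ⁻¹ ^ q * (z + w)) := by
  have hC0 : 0 ≤ C := zero_le_one.trans hC
  refine .of_endpoints H H' (fun x hx => ?_) fun x hx => ?_
  · refine hdom.sub_le_add H H' hβγ hC hzw H.left_mem hx (left_le_of_mem hx) fun i hi hip => ?_
    exact (hp i hi hip).trans (mul_le_mul_of_nonneg_left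
      (le_add_of_nonneg_right (H.map_iterate_mem_Icc hx i).1) hC0)
  · refine hdom.sub_le_add H H' hβγ hC hzw hx H.right_mem (le_right_of_mem hx) fun i hi hiq => ?_
    exact (hq i hi hiq).trans (mul_le_mul_of_nonneg_left
      (le_add_of_nonneg_left (sub_nonneg.2 (H.map_iterate_mem_Icc hx i).2)) hC0)

lemma one_le (hdom : IsDominated k u v φ ψ C 0 0)
    (H : IsLinearization k u v β φ) (H' : IsLinearization k u v γ ψ) : 1 ≤ C := by
  have hle := (hdom v H.right_mem).1
  rwa [H.map_right, H'.map_right, mul_one, add_zero] at hle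

lemma mul_div (hdom : IsDominated k u v φ ψ C 0 0)
    (H : IsLinearization k u v β φ) (H' : IsLinearization k u v γ ψ) (hβγ : β ≤ γ) :
    IsDominated k u v φ ψ (C * (β / γ)) 0 0 := by
  have hC := hdom.one_le H H'
  refine .of_endpoints H H' (fun x hx => ?_) fun x hx => ?_
  · rw [add_zero]
    exact hdom.sub_le_mul_div H H' hβγ hC H.left_mem hx (left_le_of_mem hx)
  · rw [add_zero]
    exact hdom.sub_le_mul_div H H' hβγ hC hx H.right_mem (le_right_of_mem hx)

lemma mul_div_pow (hdom : IsDominated k u v φ ψ C 0 0)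
    (H : IsLinearization k u v β φ) (H' : IsLinearization k u v γ ψ) (hβγ : β ≤ γ) (n : ℕ) :
    IsDominated k u v φ ψ (C * (β / γ) ^ n) 0 0 := by
  induction n with
  | zero => rwa [pow_zero, mul_one]
  | succ n ih =>
    rw [pow_succ, ← mul_assoc]
    exact ih.mul_div H H' hβγ

lemma of_tendsto {s : ℕ → ℝ} (hs : Tendsto s atTop (nhds 0)) {a b : ℝ}
    (hdom : ∀ n, IsDominated k u v φ ψ C (a * s n) (b * s n)) :
    IsDominated k u v φ ψ C 0 0 := by
  have hlim (a t : ℝ) : Tendsto (fun n => t + a * s n) atTop (nhds (t + 0)) := by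
    simpa only [mul_zero] using (hs.const_mul a).const_add t
  exact fun x hx => ⟨ge_of_tendsto' (hlim a _) fun n => (hdom n x hx).1,
    ge_of_tendsto' (hlim b _) fun n => (hdom n x hx).2⟩

end IsDominated

namespace IsLinearization

lemma isDominated_one_one (H : IsLinearization k u v β φ) (H' : IsLinearization k u v γ ψ)
    (hC : 0 ≤ C) : IsDominated k u v φ ψ C 1 1 := fun x hx =>
  ⟨(H'.le_one x hx).trans (le_add_of_nonneg_left (mul_nonneg hC (H.nonneg x hx))),
    (sub_le_self 1 (H'.nonneg x hx)).trans
      (le_add_of_nonneg_left (mul_nonneg hC (sub_nonneg.2 (H.le_one x hx))))⟩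

lemma isDominated_mul_pow (H : IsLinearization k u v β φ) (H' : IsLinearization k u v γ ψ)
    (hβγ : β ≤ γ) (hC : 1 ≤ C) (hp : ∀ i, 0 < i → i < p → β ^ i ≤ C * (1 - φ (shft^[i] u)))
    (hq : ∀ i, 0 < i → i < q → β ^ i ≤ C * φ (shft^[i] v)) (n : ℕ) :
    IsDominated k u v φ ψ C (γ⁻¹ ^ p * (2 * (γ⁻¹ ^ p + γ⁻¹ ^ q) ^ n))
      (γ⁻¹ ^ q * (2 * (γ⁻¹ ^ p + γ⁻¹ ^ q) ^ n)) := by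
  induction n with
  | zero =>
    rw [pow_zero, mul_one, ← one_add_one_eq_two]
    exact (H.isDominated_one_one H' (zero_le_one.trans hC)).contract H H' hβγ hC
      (by norm_num) hp hq
  | succ n ih =>
    have hsum : γ⁻¹ ^ p * (2 * (γ⁻¹ ^ p + γ⁻¹ ^ q) ^ n) + γ⁻¹ ^ q * (2 * (γ⁻¹ ^ p + γ⁻¹ ^ q) ^ n) =
        2 * (γ⁻¹ ^ p + γ⁻¹ ^ q) ^ (n + 1) := by ring
    have hγ := H'.pos
    rw [← hsum]
    exact ih.contract H H' hβγ hC (by positivity) hp hq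

lemma exists_isDominated_zero_zero (H : IsLinearization k u v β φ)
    (H' : IsLinearization k u v γ ψ) (hβγ : β < γ) : ∃ C, IsDominated k u v φ ψ C 0 0 := by
  obtain ⟨p, q, hp, hq, hcontract⟩ := exists_return_times H.one_lt hβγ
    (H.isOrbitModOne H.left_mem) (H.isOrbitModOne H.right_mem) H.map_left H.map_right
    (H.map_iterate_mem_Icc H.left_mem) (H.map_iterate_mem_Icc H.right_mem)
  obtain ⟨C, hC, hCp, hCq⟩ := ((eventually_ge_atTop (1 : ℝ)).and
    ((eventually_forall_le_mul (a := (β ^ ·)) fun i hi hip => sub_pos.2 (hp i hi hip)).and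
      (eventually_forall_le_mul (a := (β ^ ·)) hq))).exists
  have hlim : Tendsto (fun n => 2 * (γ⁻¹ ^ p + γ⁻¹ ^ q) ^ n) atTop (nhds 0) := by
    have hγ := H'.pos
    simpa only [mul_zero] using
      (tendsto_pow_atTop_nhds_zero_of_lt_one (by positivity) hcontract).const_mul 2
  exact ⟨C, .of_tendsto hlim (H.isDominated_mul_pow H' hβγ.le hC hCp hCq)⟩

lemma slope_le (H : IsLinearization k u v β φ) (H' : IsLinearization k u v γ ψ) : γ ≤ β := by
  by_contra! hβγ
  obtain ⟨C, hdom⟩ := H.exists_isDominated_zero_zero H' hβγ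
  have hlim := (tendsto_pow_atTop_nhds_zero_of_lt_one (div_nonneg H.pos.le H'.pos.le)
    ((div_lt_one H'.pos).2 hβγ)).const_mul C
  rw [mul_zero] at hlim
  exact zero_lt_one.not_ge (ge_of_tendsto' hlim fun n =>
    (hdom.mul_div_pow H H' hβγ.le n).one_le H H')

lemma slope_eq_growthRate (H : IsLinearization k u v β φ) : β = growthRate k u v :=
  H.le_growthRate.antisymm <| H.slope_le <|
    H.isLinearization_digitSeries (H.one_lt.trans_le H.le_growthRate)

lemma entS_eq_logb (H : IsLinearization k u v β φ) : entS k u v = Real.logb 2 β := by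
  rw [H.slope_eq_growthRate, growthRate, Real.logb_rpow two_pos (by norm_num)]

end IsLinearization

end SlopeUniqueness

/-- **Computation of the topological entropy of `Σ(u,v)`.** Let `k ≥ 2` and let
`u, v ∈ A^ℕ` satisfy `u₀ = 0`, `v₀ = k−1`, `u ≼ σⁿu ≼ v` and `u ≼ σⁿv ≼ v` for all
`n ≥ 0`; if `k = 2` assume additionally `σu ≼ σv`. Then: (a) if `h(Σ(u,v)) > 0`, there
exist `α ∈ [0,1]` and `β ∈ (1,∞)` with `φ̄_∞^{α,β}(σu) = α` and
`φ̄_∞^{α,β}(σv) = α+β−k+1`; (b) for every such pair `(α,β)`,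
`h(Σ(u,v)) = log₂ β`. -/
theorem entropy_computation (k : ℕ) (hk : 2 ≤ k) (u v : ℕ → ℕ)
    (hu : ∀ i, u i < k) (hv : ∀ i, v i < k)
    (hu0 : u 0 = 0) (hv0 : v 0 = k - 1)
    (hcond : ∀ n, lexLe u (shft^[n] u) ∧ lexLe (shft^[n] u) v ∧
                  lexLe u (shft^[n] v) ∧ lexLe (shft^[n] v) v)
    (hk2 : k = 2 → lexLe (shft u) (shft v)) :
    (0 < entS k u v →
      ∃ α β : ℝ, α ∈ Set.Icc (0 : ℝ) 1 ∧ 1 < β ∧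
        phiBInf α β (shft u) = α ∧ phiBInf α β (shft v) = α + β - k + 1) ∧
    (∀ α β : ℝ, α ∈ Set.Icc (0 : ℝ) 1 → 1 < β →
      phiBInf α β (shft u) = α → phiBInf α β (shft v) = α + β - k + 1 →
      entS k u v = Real.logb 2 β) := by
  have D : IsExtremalPair k u v := ⟨hk, ⟨hu, fun n => ⟨(hcond n).1, (hcond n).2.1⟩⟩,
    ⟨hv, fun n => (hcond n).2.2⟩, hu0, hv0⟩
  refine ⟨fun hpos => ?_, fun α β _ hβ hleft hright =>
    (D.isLinearization_phiBInf hβ hleft hright).entS_eq_logb⟩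
  have H := D.isLinearization_digitSeries (Real.one_lt_rpow one_lt_two hpos)
  obtain ⟨α, hα, hleft, hright⟩ := H.exists_phiBInf_eq
  exact ⟨α, growthRate k u v, hα, H.one_lt, hleft, hright⟩
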